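/- arXiv:1608.07010 — 2 statements merged into one kernel-verified Lean document; each statement's English description precedes it below -/
import Mathlib

section
/- For every δ ∈ (0, 1/100] there exists a function ω₀ : ℝ² → ℝ of class C¹ which is 2-periodic in each variable, is odd in x₁ (ω₀(−x₁,x₂) = −ω₀(x₁,x₂)) and odd in x₂ (ω₀(x₁,−x₂) = −ω₀(x₁,x₂)), satisfies 0 ≤ ω₀ ≤ 1 on [0,1]², ω₀ = 1 on [δ, 1−δ]², ω₀(s,s) = s / log(−log s) for every s ∈ (0, δ/2], and ‖∇ω₀‖_{L∞} ≤ 20/δ. -/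
open Real Set

open Filter Topology

/-! Near the origin the function is the saddle `x₁ x₂ k(ρ) / ρ`, where `ρ` is the root mean square
of the coordinates, so that `ρ = s` at `(s, s)`, and `k(ρ) = 1 / log (-log ρ)`. It is homogeneous
of degree one up to the factor `k`, so its partial derivatives are bounded combinations of `k(ρ)`
and `ρ k'(ρ)`; both tend to zero with `ρ`, which makes it of class `C¹` across the origin.

An odd step `φ` that vanishes on `[0, 1/2]` and equals `1` on `[1, ∞)` joins the saddle to the
plateau: on the scale `δ`, take `φ(u) φ(v)` plus the saddle at the truncated coordinates
`t (1 - φ(t)²)`, which vanish where `φ = 1`. The steps cost `O(1 / δ)` in the gradient,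
the saddle only `O(1)`. Finally a smoothed triangle wave, equal to the identity near `0`, folds the
torus onto this corner. -/

section Primitive

variable {f : ℝ → ℝ}

theorem contDiff_one_integral (hf : Continuous f) (a : ℝ) :
    ContDiff ℝ 1 fun x => ∫ t in a..x, f t := by
  have hderiv : deriv (fun x => ∫ t in a..x, f t) = f := funext (hf.deriv_integral f a)
  rw [contDiff_one_iff_deriv, hderiv]
  exact ⟨fun x => (hf.integral_hasStrictDerivAt a x).hasDerivAt.differentiableAt, hf⟩

theorem odd_integral_of_even (hf : f.Even) : Function.Odd fun x => ∫ t in (0 : ℝ)..x, f t := by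
  intro x
  have hcomp := intervalIntegral.integral_comp_neg (a := 0) (b := x) f
  simp only [hf _, neg_zero] at hcomp
  simp only [hcomp, intervalIntegral.integral_symm (-x) 0]

theorem integral_eq_zero_of_eqOn {a b : ℝ} (hf : EqOn f 0 (uIcc a b)) : ∫ t in a..b, f t = 0 := by
  rw [intervalIntegral.integral_congr hf]
  exact intervalIntegral.integral_zero

end Primitive

/-! ### Operator norms of differentials -/

theorem norm_fderiv_prodMap_le {E E' F F' : Type*} [NormedAddCommGroup E] [NormedSpace ℝ E]
    [NormedAddCommGroup E'] [NormedSpace ℝ E'] [NormedAddCommGroup F] [NormedSpace ℝ F]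
    [NormedAddCommGroup F'] [NormedSpace ℝ F'] {f : E → F} {g : E' → F'} {z : E × E'}
    (hf : DifferentiableAt ℝ f z.1) (hg : DifferentiableAt ℝ g z.2) :
    ‖fderiv ℝ (Prod.map f g) z‖ ≤ max ‖fderiv ℝ f z.1‖ ‖fderiv ℝ g z.2‖ := by
  rw [(hf.hasFDerivAt.prodMap z hg.hasFDerivAt).fderiv]
  refine ContinuousLinearMap.opNorm_le_bound _ (by positivity) fun v => max_le ?_ ?_
  · exact ((fderiv ℝ f z.1).le_opNorm v.1).trans
      (mul_le_mul (le_max_left _ _) (norm_fst_le v) (norm_nonneg _) (by positivity))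
  · exact ((fderiv ℝ g z.2).le_opNorm v.2).trans
      (mul_le_mul (le_max_right _ _) (norm_snd_le v) (norm_nonneg _) (by positivity))

theorem norm_fderiv_prodMap_self_le {f : ℝ → ℝ} {M : ℝ} (hf : Differentiable ℝ f)
    (hM : ∀ x, ‖deriv f x‖ ≤ M) (z : ℝ × ℝ) : ‖fderiv ℝ (Prod.map f f) z‖ ≤ M :=
  (norm_fderiv_prodMap_le (hf z.1) (hf z.2)).trans
    (max_le (norm_deriv_eq_norm_fderiv.symm.trans_le (hM z.1))
      (norm_deriv_eq_norm_fderiv.symm.trans_le (hM z.2)))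

theorem norm_fderiv_comp_smul_prodMap_self_le {g : ℝ × ℝ → ℝ} {f : ℝ → ℝ} {c M N : ℝ} {z : ℝ × ℝ}
    (hg : DifferentiableAt ℝ g (c • Prod.map f f z)) (hN : ‖fderiv ℝ g (c • Prod.map f f z)‖ ≤ N)
    (hf : Differentiable ℝ f) (hM : ∀ x, ‖deriv f x‖ ≤ M) :
    ‖fderiv ℝ (fun z => g (c • Prod.map f f z)) z‖ ≤ N * (|c| * M) := by
  have hmap : DifferentiableAt ℝ (Prod.map f f) z := (hf z.1).prodMap z (hf z.2)
  have hsmul : ‖c • fderiv ℝ (Prod.map f f) z‖ ≤ |c| * M := by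
    rw [norm_smul]
    exact mul_le_mul_of_nonneg_left (norm_fderiv_prodMap_self_le hf hM z) (abs_nonneg c)
  have hcomp : fderiv ℝ (fun z => g (c • Prod.map f f z)) z =
      (fderiv ℝ g (c • Prod.map f f z)).comp (c • fderiv ℝ (Prod.map f f) z) :=
    (hg.hasFDerivAt.comp (f := fun z => c • Prod.map f f z) z
      (hmap.hasFDerivAt.const_smul c)).fderiv
  rw [hcomp]
  exact (ContinuousLinearMap.opNorm_comp_le _ _).trans
    (mul_le_mul hN hsmul (norm_nonneg _) ((norm_nonneg _).trans hN))

theorem sqrt_sq_add_sq_le_opNorm (L : ℝ × ℝ →L[ℝ] ℝ) : √(L (1, 0) ^ 2 + L (0, 1) ^ 2) ≤ ‖L‖ := by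
  set a := L (1, 0)
  set b := L (0, 1)
  set v : ℝ × ℝ := (SignType.sign a, SignType.sign b)
  have hv : L v = |a| + |b| := by
    have hdecomp : v = (SignType.sign a : ℝ) • (1, 0) + (SignType.sign b : ℝ) • (0, 1) := by
      simp [v]
    rw [hdecomp, map_add, map_smul, map_smul, smul_eq_mul, smul_eq_mul, sign_mul_self,
      sign_mul_self]
  have hnorm : ‖v‖ ≤ 1 := by
    have hsign (c : ℝ) : ‖(SignType.sign c : ℝ)‖ ≤ 1 := by
      rcases SignType.trichotomy (SignType.sign c) with h | h | h <;> simp [h]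
    exact max_le (hsign a) (hsign b)
  calc √(a ^ 2 + b ^ 2) ≤ |a| + |b| := sqrt_le_iff.2 ⟨by positivity, by
        nlinarith [sq_abs a, sq_abs b, mul_nonneg (abs_nonneg a) (abs_nonneg b)]⟩
    _ = L v := hv.symm
    _ ≤ ‖L v‖ := le_norm_self _
    _ ≤ ‖L‖ := L.unit_le_opNorm v hnorm

/-! ### The folding map -/

/-- The derivative of `triangleWave`: the function `2 cos (π t)` truncated at `±1`. -/
noncomputable def triangleSlope (t : ℝ) : ℝ := max (-1) (min 1 (2 * cos (π * t)))

/-- A `C¹` triangle wave: odd, `2`-periodic, symmetric about `1/2`, and equal to the identity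
near `0`. -/
noncomputable def triangleWave (x : ℝ) : ℝ := ∫ t in (0 : ℝ)..x, triangleSlope t

theorem continuous_triangleSlope : Continuous triangleSlope := by
  unfold triangleSlope; fun_prop

theorem abs_triangleSlope_le (t : ℝ) : |triangleSlope t| ≤ 1 :=
  abs_le.2 ⟨le_max_left _ _, max_le (by norm_num) (min_le_left _ _)⟩

theorem even_triangleSlope : triangleSlope.Even := fun t => by simp [triangleSlope]

theorem triangleSlope_one_sub (t : ℝ) : triangleSlope (1 - t) = -triangleSlope t := by
  have hcos : cos (π * (1 - t)) = -cos (π * t) := by rw [mul_one_sub, cos_pi_sub]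
  rw [triangleSlope, triangleSlope, hcos]
  grind

theorem triangleSlope_eq_one {t : ℝ} (ht : |t| ≤ 1 / 3) : triangleSlope t = 1 := by
  have hcos : 1 / 2 ≤ cos (π * t) := by
    rw [← cos_pi_div_three, ← cos_abs (π * t), abs_mul, abs_of_pos pi_pos]
    exact cos_le_cos_of_nonneg_of_le_pi (by positivity) (by linarith [pi_pos])
      (by nlinarith [pi_pos])
  rw [triangleSlope, min_eq_left (by linarith), max_eq_right (by norm_num)]

theorem triangleSlope_nonneg {t : ℝ} (ht : t ∈ Icc (0 : ℝ) (1 / 2)) : 0 ≤ triangleSlope t := by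
  have hcos : 0 ≤ cos (π * t) :=
    cos_nonneg_of_mem_Icc ⟨by nlinarith [pi_pos, ht.1], by nlinarith [pi_pos, ht.2]⟩
  exact le_max_of_le_right (le_min zero_le_one (by positivity))

theorem hasDerivAt_triangleWave (x : ℝ) : HasDerivAt triangleWave (triangleSlope x) x :=
  (continuous_triangleSlope.integral_hasStrictDerivAt 0 x).hasDerivAt

theorem contDiff_triangleWave : ContDiff ℝ 1 triangleWave :=
  contDiff_one_integral continuous_triangleSlope 0

theorem norm_deriv_triangleWave_le (x : ℝ) : ‖deriv triangleWave x‖ ≤ 1 := by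
  rw [(hasDerivAt_triangleWave x).deriv]
  exact abs_triangleSlope_le x

theorem triangleWave_neg (x : ℝ) : triangleWave (-x) = -triangleWave x :=
  odd_integral_of_even even_triangleSlope x

theorem triangleWave_one_sub (x : ℝ) : triangleWave (1 - x) = triangleWave x := by
  have hreflect (y : ℝ) :
      ∫ t in y..1, triangleSlope t = -∫ t in (0 : ℝ)..1 - y, triangleSlope t := by
    have hcomp := intervalIntegral.integral_comp_sub_left (a := 0) (b := 1 - y) triangleSlope 1
    simp only [triangleSlope_one_sub, intervalIntegral.integral_neg, sub_sub_cancel,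
      sub_zero] at hcomp
    exact hcomp.symm
  have hzero : ∫ t in (0 : ℝ)..1, triangleSlope t = 0 := by
    have := hreflect 0
    rw [sub_zero] at this
    linarith
  have hsplit := intervalIntegral.integral_add_adjacent_intervals
    (continuous_triangleSlope.intervalIntegrable (μ := MeasureTheory.volume) 0 x)
    (continuous_triangleSlope.intervalIntegrable x 1)
  rw [hzero, hreflect x] at hsplit
  unfold triangleWave
  linarith

theorem antiperiodic_triangleWave : Function.Antiperiodic triangleWave 1 := fun x => by
  rw [← triangleWave_one_sub, sub_add_cancel_right, triangleWave_neg]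

theorem triangleWave_add_two (x : ℝ) : triangleWave (x + 2) = triangleWave x := by
  simpa using antiperiodic_triangleWave.periodic_two_mul x

theorem triangleWave_eq_self {x : ℝ} (hx : |x| ≤ 1 / 3) : triangleWave x = x := by
  have hslope : EqOn triangleSlope (fun _ => 1) (uIcc 0 x) := fun t ht => by
    have htx : |t| ≤ |x| := by simpa using abs_sub_left_of_mem_uIcc ht
    exact triangleSlope_eq_one (htx.trans hx)
  simp [triangleWave, intervalIntegral.integral_congr hslope]

theorem monotoneOn_triangleWave : MonotoneOn triangleWave (Icc 0 (1 / 2)) := by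
  refine monotoneOn_of_deriv_nonneg (convex_Icc _ _) contDiff_triangleWave.continuous.continuousOn
    (contDiff_triangleWave.differentiable one_ne_zero).differentiableOn fun x hx => ?_
  rw [(hasDerivAt_triangleWave x).deriv]
  exact triangleSlope_nonneg (interior_subset hx)

theorem le_triangleWave {a x : ℝ} (ha₀ : 0 ≤ a) (ha₁ : a ≤ 1 / 3) (hx : x ∈ Icc a (1 - a)) :
    a ≤ triangleWave x := by
  wlog hhalf : x ≤ 1 / 2 generalizing x
  · rw [← triangleWave_one_sub]
    exact this ⟨by linarith [hx.2], by linarith [hx.1]⟩ (by linarith)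
  calc a = triangleWave a := (triangleWave_eq_self (by rwa [abs_of_nonneg ha₀])).symm
    _ ≤ triangleWave x :=
      monotoneOn_triangleWave ⟨ha₀, hx.1.trans hhalf⟩ ⟨ha₀.trans hx.1, hhalf⟩ hx.1

/-! ### The odd step and the odd cutoff -/

/-- The derivative of `oddStep`; the factor `48` gives it integral `1` over `[1/2, 1]`. -/
noncomputable def oddStepSlope (t : ℝ) : ℝ := max 0 (48 * ((|t| - 1 / 2) * (1 - |t|)))

/-- An odd nondecreasing `C¹` function equal to `0` on `[0, 1/2]` and to `1` on `[1, ∞)`. -/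
noncomputable def oddStep (x : ℝ) : ℝ := ∫ t in (0 : ℝ)..x, oddStepSlope t

/-- An odd `C¹` function of compact support equal to the identity near `0`. -/
noncomputable def oddCutoff (x : ℝ) : ℝ := x * (1 - oddStep x ^ 2)

theorem continuous_oddStepSlope : Continuous oddStepSlope := by
  unfold oddStepSlope; fun_prop

theorem oddStepSlope_nonneg (t : ℝ) : 0 ≤ oddStepSlope t := le_max_left _ _

theorem oddStepSlope_le (t : ℝ) : oddStepSlope t ≤ 3 :=
  max_le (by norm_num) (by nlinarith [sq_nonneg (|t| - 3 / 4)])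

theorem oddStepSlope_eq_zero_of_abs_le {t : ℝ} (ht : |t| ≤ 1 / 2) : oddStepSlope t = 0 :=
  max_eq_left (by nlinarith)

theorem oddStepSlope_eq_zero_of_le_abs {t : ℝ} (ht : 1 ≤ |t|) : oddStepSlope t = 0 :=
  max_eq_left (by nlinarith)

theorem oddStepSlope_of_mem {t : ℝ} (ht : t ∈ Icc (1 / 2 : ℝ) 1) :
    oddStepSlope t = 48 * ((t - 1 / 2) * (1 - t)) := by
  rw [oddStepSlope, abs_of_nonneg (by linarith [ht.1])]
  exact max_eq_right (mul_nonneg (by norm_num)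
    (mul_nonneg (by linarith [ht.1]) (by linarith [ht.2])))

theorem integral_oddStepSlope : ∫ t in (1 / 2 : ℝ)..1, oddStepSlope t = 1 := by
  have hpoly : EqOn oddStepSlope (fun t => t * 72 - t ^ 2 * 48 - 24) (uIcc (1 / 2) 1) := by
    intro t ht
    rw [uIcc_of_le (by norm_num)] at ht
    rw [oddStepSlope_of_mem ht]
    ring
  rw [intervalIntegral.integral_congr hpoly, intervalIntegral.integral_sub,
    intervalIntegral.integral_sub]
  · norm_num [integral_id, integral_pow]
  all_goals exact Continuous.intervalIntegrable (by fun_prop) _ _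

theorem hasDerivAt_oddStep (x : ℝ) : HasDerivAt oddStep (oddStepSlope x) x :=
  (continuous_oddStepSlope.integral_hasStrictDerivAt 0 x).hasDerivAt

theorem contDiff_oddStep : ContDiff ℝ 1 oddStep := contDiff_one_integral continuous_oddStepSlope 0

theorem monotone_oddStep : Monotone oddStep :=
  monotone_of_hasDerivAt_nonneg hasDerivAt_oddStep oddStepSlope_nonneg

theorem oddStep_neg (x : ℝ) : oddStep (-x) = -oddStep x :=
  odd_integral_of_even (fun t => by simp [oddStepSlope]) x

theorem oddStep_eq_zero {x : ℝ} (hx : |x| ≤ 1 / 2) : oddStep x = 0 :=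
  integral_eq_zero_of_eqOn fun t ht => by
    have htx : |t| ≤ |x| := by simpa using abs_sub_left_of_mem_uIcc ht
    exact oddStepSlope_eq_zero_of_abs_le (htx.trans hx)

theorem oddStep_eq_one {x : ℝ} (hx : 1 ≤ x) : oddStep x = 1 := by
  have hint (a b : ℝ) : IntervalIntegrable oddStepSlope MeasureTheory.volume a b :=
    continuous_oddStepSlope.intervalIntegrable a b
  have hleft : ∫ t in (0 : ℝ)..1 / 2, oddStepSlope t = 0 := oddStep_eq_zero (by norm_num)
  have hright : ∫ t in (1 : ℝ)..x, oddStepSlope t = 0 := integral_eq_zero_of_eqOn fun t ht => by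
    rw [uIcc_of_le hx] at ht
    exact oddStepSlope_eq_zero_of_le_abs (ht.1.trans (le_abs_self t))
  rw [oddStep, ← intervalIntegral.integral_add_adjacent_intervals (hint 0 1) (hint 1 x),
    ← intervalIntegral.integral_add_adjacent_intervals (hint 0 (1 / 2)) (hint (1 / 2) 1),
    hleft, integral_oddStepSlope, hright]
  norm_num

theorem oddStep_mem_Icc {x : ℝ} (hx : 0 ≤ x) : oddStep x ∈ Icc (0 : ℝ) 1 := by
  constructor
  · calc 0 = oddStep 0 := (oddStep_eq_zero (by norm_num)).symm
      _ ≤ oddStep x := monotone_oddStep hx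
  · calc oddStep x ≤ oddStep (max x 1) := monotone_oddStep (le_max_left x 1)
      _ = 1 := oddStep_eq_one (le_max_right x 1)

theorem abs_oddStep_le (x : ℝ) : |oddStep x| ≤ 1 := by
  wlog hx : 0 ≤ x generalizing x
  · simpa [oddStep_neg] using this (-x) (by linarith)
  · rw [abs_of_nonneg (oddStep_mem_Icc hx).1]
    exact (oddStep_mem_Icc hx).2

theorem oddCutoff_neg (x : ℝ) : oddCutoff (-x) = -oddCutoff x := by
  rw [oddCutoff, oddCutoff, oddStep_neg]; ring

theorem oddCutoff_eq_self {x : ℝ} (hx : |x| ≤ 1 / 2) : oddCutoff x = x := by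
  simp [oddCutoff, oddStep_eq_zero hx]

theorem oddCutoff_eq_zero {x : ℝ} (hx : 1 ≤ x) : oddCutoff x = 0 := by
  simp [oddCutoff, oddStep_eq_one hx]

theorem oddCutoff_mem_Icc {x : ℝ} (hx : 0 ≤ x) : oddCutoff x ∈ Icc 0 (1 - oddStep x ^ 2) := by
  have hstep : 0 ≤ 1 - oddStep x ^ 2 := sub_nonneg.2 ((sq_le_one_iff_abs_le_one _).2
    (abs_oddStep_le x))
  refine ⟨mul_nonneg hx hstep, ?_⟩
  rcases le_total x 1 with hx₁ | hx₁
  · exact mul_le_of_le_one_left hstep hx₁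
  · rwa [oddCutoff_eq_zero hx₁]

theorem abs_oddCutoff_le (x : ℝ) : |oddCutoff x| ≤ 1 := by
  wlog hx : 0 ≤ x generalizing x
  · simpa [oddCutoff_neg] using this (-x) (by linarith)
  · rw [abs_of_nonneg (oddCutoff_mem_Icc hx).1]
    exact (oddCutoff_mem_Icc hx).2.trans (sub_le_self _ (sq_nonneg _))

theorem contDiff_oddCutoff : ContDiff ℝ 1 oddCutoff :=
  contDiff_id.mul (contDiff_const.sub (contDiff_oddStep.pow 2))

theorem norm_deriv_oddCutoff_le (x : ℝ) : ‖deriv oddCutoff x‖ ≤ 7 := by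
  have hderiv : deriv oddCutoff x =
      (1 - oddStep x ^ 2) - 2 * (oddStep x * (x * oddStepSlope x)) := by
    have h := (hasDerivAt_id x).mul (((hasDerivAt_oddStep x).pow 2).const_sub 1)
    refine (h.congr_deriv ?_).deriv
    simp only [id_eq, Pi.pow_apply, Nat.cast_ofNat, Nat.reduceSub, pow_one, one_mul]
    ring
  have hslope : |x * oddStepSlope x| ≤ 3 := by
    rcases le_total |x| 1 with hx | hx
    · rw [abs_mul, abs_of_nonneg (oddStepSlope_nonneg x)]
      nlinarith [oddStepSlope_nonneg x, oddStepSlope_le x]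
    · simp [oddStepSlope_eq_zero_of_le_abs hx]
  have hprod : |oddStep x * (x * oddStepSlope x)| ≤ 3 := by
    rw [abs_mul]
    exact (mul_le_of_le_one_left (abs_nonneg _) (abs_oddStep_le x)).trans hslope
  have hsq : oddStep x ^ 2 ≤ 1 := (sq_le_one_iff_abs_le_one _).2 (abs_oddStep_le x)
  rw [hderiv, norm_eq_abs, abs_le]
  constructor <;> linarith [abs_le.1 hprod, sq_nonneg (oddStep x)]

/-! ### Radial saddles -/

/-- The root mean square of the two coordinates, a multiple of the Euclidean norm normalized to be
`s` at `(s, s)`. -/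
noncomputable def rms (z : ℝ × ℝ) : ℝ := √((z.1 ^ 2 + z.2 ^ 2) / 2)

/-- The saddle `x y k(ρ) / ρ` with radial profile `k`, where `ρ` is `rms (x, y)`. -/
noncomputable def radialSaddle (k : ℝ → ℝ) (z : ℝ × ℝ) : ℝ := z.1 * z.2 * (k (rms z) / rms z)

/-- The partial derivative of `radialSaddle k` in the first coordinate, where `w ρ` stands for
`ρ k'(ρ)`. Division by zero gives the correct value `0` at the origin. -/
noncomputable def radialSaddlePartial (k w : ℝ → ℝ) (z : ℝ × ℝ) : ℝ :=
  z.2 / rms z * ((1 - z.1 ^ 2 / (2 * rms z ^ 2)) * k (rms z) +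
    z.1 ^ 2 / (2 * rms z ^ 2) * w (rms z))

/-- The differential of `radialSaddle k`; the second partial derivative is obtained from the first
by symmetry. -/
noncomputable def radialSaddleFDeriv (k w : ℝ → ℝ) (z : ℝ × ℝ) : ℝ × ℝ →L[ℝ] ℝ :=
  radialSaddlePartial k w z • ContinuousLinearMap.fst ℝ ℝ ℝ +
    radialSaddlePartial k w z.swap • ContinuousLinearMap.snd ℝ ℝ ℝ

/-- The condition on a profile `k` on `[0, R)` under which `radialSaddle k` is of class `C¹` where
`rms < R`: both `k` and `w(s) = s k'(s)` are continuous and vanish at `0`. -/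
structure IsSaddleProfile (k w : ℝ → ℝ) (R : ℝ) : Prop where
  continuousOn : ContinuousOn k (Ico 0 R)
  continuousOn_slope : ContinuousOn w (Ico 0 R)
  zero : k 0 = 0
  slope_zero : w 0 = 0
  hasDerivAt : ∀ s ∈ Ioo 0 R, HasDerivAt k (w s / s) s

theorem continuous_rms : Continuous rms := by unfold rms; fun_prop

theorem rms_nonneg (z : ℝ × ℝ) : 0 ≤ rms z := sqrt_nonneg _

theorem sq_rms (z : ℝ × ℝ) : rms z ^ 2 = (z.1 ^ 2 + z.2 ^ 2) / 2 := sq_sqrt (by positivity)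

theorem rms_zero : rms 0 = 0 := by simp [rms]

theorem rms_swap (z : ℝ × ℝ) : rms z.swap = rms z := by simp [rms, add_comm]

theorem rms_self {s : ℝ} (hs : 0 ≤ s) : rms (s, s) = s := by
  simp only [rms, add_self_div_two, sqrt_sq hs]

theorem rms_pos {z : ℝ × ℝ} (hz : z ≠ 0) : 0 < rms z := by
  rw [rms, sqrt_pos]
  by_contra! hle
  exact hz (Prod.ext (by simp only [Prod.fst_zero]; nlinarith [sq_nonneg z.1, sq_nonneg z.2])
    (by simp only [Prod.snd_zero]; nlinarith [sq_nonneg z.1, sq_nonneg z.2]))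

theorem rms_le_norm (z : ℝ × ℝ) : rms z ≤ ‖z‖ := by
  have hfst : z.1 ^ 2 ≤ ‖z‖ ^ 2 := sq_le_sq' (neg_le_of_abs_le (norm_fst_le z))
    (le_of_abs_le (norm_fst_le z))
  have hsnd : z.2 ^ 2 ≤ ‖z‖ ^ 2 := sq_le_sq' (neg_le_of_abs_le (norm_snd_le z))
    (le_of_abs_le (norm_snd_le z))
  exact sqrt_le_iff.2 ⟨norm_nonneg z, by linarith⟩

theorem abs_snd_div_rms_le (z : ℝ × ℝ) : |z.2 / rms z| ≤ 2 := by
  rw [abs_div, abs_of_nonneg (rms_nonneg z)]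
  refine div_le_of_le_mul₀ (rms_nonneg z) zero_le_two (abs_le_of_sq_le_sq ?_ ?_)
  · nlinarith [sq_rms z, sq_nonneg z.1, sq_nonneg z.2]
  · linarith [rms_nonneg z]

theorem fst_sq_div_rms_mem_Icc (z : ℝ × ℝ) : z.1 ^ 2 / (2 * rms z ^ 2) ∈ Icc (0 : ℝ) 1 :=
  ⟨by positivity, div_le_one_of_le₀ (by linarith [sq_rms z, sq_nonneg z.2]) (by positivity)⟩

theorem hasFDerivAt_rms {z : ℝ × ℝ} (hz : z ≠ 0) :
    HasFDerivAt rms ((z.1 / (2 * rms z)) • ContinuousLinearMap.fst ℝ ℝ ℝ +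
      (z.2 / (2 * rms z)) • ContinuousLinearMap.snd ℝ ℝ ℝ) z := by
  have hsq : HasFDerivAt (fun z : ℝ × ℝ => (z.1 ^ 2 + z.2 ^ 2) / 2)
      (z.1 • ContinuousLinearMap.fst ℝ ℝ ℝ + z.2 • ContinuousLinearMap.snd ℝ ℝ ℝ) z := by
    refine (((hasFDerivAt_fst.pow 2).add (hasFDerivAt_snd.pow 2)).mul_const 2⁻¹).congr_fderiv ?_
    ext <;> simp
  refine (hsq.sqrt (sqrt_pos.1 (rms_pos hz)).ne').congr_fderiv ?_
  rw [← rms, smul_add, smul_smul, smul_smul, one_div_mul_eq_div, one_div_mul_eq_div]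

theorem radialSaddle_neg_fst (k : ℝ → ℝ) (x y : ℝ) :
    radialSaddle k (-x, y) = -radialSaddle k (x, y) := by
  simp [radialSaddle, rms]

theorem radialSaddle_neg_snd (k : ℝ → ℝ) (x y : ℝ) :
    radialSaddle k (x, -y) = -radialSaddle k (x, y) := by
  simp [radialSaddle, rms]

theorem radialSaddle_self (k : ℝ → ℝ) {s : ℝ} (hs : 0 < s) : radialSaddle k (s, s) = s * k s := by
  rw [radialSaddle, rms_self hs.le]
  field_simp

theorem abs_radialSaddle_le (k : ℝ → ℝ) (z : ℝ × ℝ) :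
    |radialSaddle k z| ≤ rms z * |k (rms z)| := by
  rcases eq_or_ne z 0 with rfl | hz
  · simp [radialSaddle, rms_zero]
  have hmul : |z.1 * z.2| ≤ rms z ^ 2 := by
    rw [sq_rms, abs_mul, ← sq_abs z.1, ← sq_abs z.2]
    linarith [two_mul_le_add_sq |z.1| |z.2|]
  calc |radialSaddle k z| = |z.1 * z.2| * (|k (rms z)| / rms z) := by
        rw [radialSaddle, abs_mul, abs_div, abs_of_pos (rms_pos hz)]
    _ ≤ rms z ^ 2 * (|k (rms z)| / rms z) :=
        mul_le_mul_of_nonneg_right hmul (div_nonneg (abs_nonneg _) (rms_nonneg z))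
    _ = rms z * |k (rms z)| := by
        have := (rms_pos hz).ne'
        field_simp

theorem radialSaddle_mem_Icc {k : ℝ → ℝ} {z : ℝ × ℝ} (hz : 0 ≤ z)
    (hk : k (rms z) ∈ Icc (0 : ℝ) 1) : radialSaddle k z ∈ Icc 0 (rms z) := by
  refine ⟨mul_nonneg (mul_nonneg hz.1 hz.2) (div_nonneg hk.1 (rms_nonneg z)), ?_⟩
  calc radialSaddle k z ≤ rms z * |k (rms z)| := (le_abs_self _).trans (abs_radialSaddle_le k z)
    _ ≤ rms z := by
      rw [abs_of_nonneg hk.1]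
      exact mul_le_of_le_one_right (rms_nonneg z) hk.2

theorem abs_radialSaddlePartial_le {k w : ℝ → ℝ} {z : ℝ × ℝ} {M : ℝ} (hk : |k (rms z)| ≤ M)
    (hw : |w (rms z)| ≤ M) : |radialSaddlePartial k w z| ≤ 2 * M := by
  obtain ⟨hθ₀, hθ₁⟩ := fst_sq_div_rms_mem_Icc z
  have hcomb := convex_Icc (-M) M (abs_le.1 hk) (abs_le.1 hw) (sub_nonneg.2 hθ₁) hθ₀
    (sub_add_cancel _ _)
  rw [radialSaddlePartial, abs_mul]
  exact mul_le_mul (abs_snd_div_rms_le z) (abs_le.2 hcomb) (abs_nonneg _) zero_le_two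

theorem norm_radialSaddleFDeriv_le {k w : ℝ → ℝ} {z : ℝ × ℝ} {M : ℝ} (hk : |k (rms z)| ≤ M)
    (hw : |w (rms z)| ≤ M) : ‖radialSaddleFDeriv k w z‖ ≤ 4 * M := by
  have hfst : ‖radialSaddlePartial k w z • ContinuousLinearMap.fst ℝ ℝ ℝ‖ ≤ 2 * M := by
    rw [norm_smul]
    exact (mul_le_of_le_one_right (norm_nonneg _) (ContinuousLinearMap.norm_fst_le ..)).trans
      (abs_radialSaddlePartial_le hk hw)
  have hsnd : ‖radialSaddlePartial k w z.swap • ContinuousLinearMap.snd ℝ ℝ ℝ‖ ≤ 2 * M := by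
    rw [← rms_swap] at hk hw
    rw [norm_smul]
    exact (mul_le_of_le_one_right (norm_nonneg _) (ContinuousLinearMap.norm_snd_le ..)).trans
      (abs_radialSaddlePartial_le hk hw)
  exact (norm_add_le_of_le hfst hsnd).trans_eq (by ring)

namespace IsSaddleProfile

variable {k w : ℝ → ℝ} {R : ℝ} {z : ℝ × ℝ}

theorem continuousAt_comp_rms {g : ℝ → ℝ} (hg : ContinuousOn g (Ico 0 R)) (hz : rms z < R) :
    ContinuousAt (fun z => g (rms z)) z :=
  (hg.comp continuous_rms.continuousOn fun x hx => ⟨rms_nonneg x, hx⟩).continuousAt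
    ((isOpen_lt continuous_rms continuous_const).mem_nhds hz)

theorem tendsto_comp_rms_zero {g : ℝ → ℝ} (hR : 0 < R) (hg : ContinuousOn g (Ico 0 R))
    (hg₀ : g 0 = 0) : Tendsto (fun z => g (rms z)) (𝓝 0) (𝓝 0) := by
  simpa only [rms_zero, hg₀] using (continuousAt_comp_rms hg (rms_zero.trans_lt hR)).tendsto

theorem hasFDerivAt_zero (h : IsSaddleProfile k w R) (hR : 0 < R) :
    HasFDerivAt (radialSaddle k) (radialSaddleFDeriv k w 0) 0 := by
  have hfderiv : radialSaddleFDeriv k w 0 = 0 := by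
    simp [radialSaddleFDeriv, radialSaddlePartial]
  have hbound : radialSaddle k =O[𝓝 0] fun z => ‖z‖ * k (rms z) := by
    refine Asymptotics.isBigO_of_le _ fun z => ?_
    rw [norm_mul, norm_norm]
    exact (abs_radialSaddle_le k z).trans
      (mul_le_mul_of_nonneg_right (rms_le_norm z) (abs_nonneg _))
  have hlittle : (fun z : ℝ × ℝ => ‖z‖ * k (rms z)) =o[𝓝 0] fun z => ‖z‖ * (1 : ℝ) :=
    (Asymptotics.isBigO_refl _ _).mul_isLittleO
      ((Asymptotics.isLittleO_one_iff ℝ).2 (tendsto_comp_rms_zero hR h.continuousOn h.zero))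
  have hzero : radialSaddle k 0 = 0 := by simp [radialSaddle]
  rw [hfderiv, hasFDerivAt_iff_isLittleO_nhds_zero]
  simp only [zero_add, hzero, sub_zero, zero_apply]
  exact ((hbound.trans_isLittleO hlittle).congr_right fun z => mul_one ‖z‖).of_norm_right

theorem hasFDerivAt_radialSaddle (h : IsSaddleProfile k w R) (hz : rms z < R) :
    HasFDerivAt (radialSaddle k) (radialSaddleFDeriv k w z) z := by
  rcases eq_or_ne z 0 with rfl | hz₀
  · exact h.hasFDerivAt_zero (rms_zero.symm.trans_lt hz)
  have hρ := rms_pos hz₀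
  have hquot : HasDerivAt (fun s => k s / s) ((w (rms z) - k (rms z)) / rms z ^ 2) (rms z) := by
    refine ((h.hasDerivAt _ ⟨hρ, hz⟩).div (hasDerivAt_id _) hρ.ne').congr_deriv ?_
    rw [id_eq, mul_one, div_mul_cancel₀ _ hρ.ne']
  refine ((hasFDerivAt_fst.mul hasFDerivAt_snd).mul
    (hquot.comp_hasFDerivAt z (hasFDerivAt_rms hz₀))).congr_fderiv ?_
  ext <;> simp [radialSaddleFDeriv, radialSaddlePartial, rms_swap] <;> field_simp <;> ring

theorem continuousAt_radialSaddlePartial (h : IsSaddleProfile k w R) (hz : rms z < R) :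
    ContinuousAt (radialSaddlePartial k w) z := by
  have hk := continuousAt_comp_rms h.continuousOn hz
  have hw := continuousAt_comp_rms h.continuousOn_slope hz
  have hρ := continuous_rms.continuousAt (x := z)
  rcases eq_or_ne z 0 with rfl | hz₀
  · have hmax : Tendsto (fun z => 2 * max |k (rms z)| |w (rms z)|) (𝓝 0) (𝓝 0) := by
      simpa [rms_zero, h.zero, h.slope_zero] using (hk.abs.max hw.abs).const_mul 2
    have hzero : radialSaddlePartial k w 0 = 0 := by simp [radialSaddlePartial]
    rw [ContinuousAt, hzero]
    exact squeeze_zero_norm (fun z => abs_radialSaddlePartial_le (le_max_left _ _)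
      (le_max_right _ _)) hmax
  · have hρ₀ := (rms_pos hz₀).ne'
    have hθ : ContinuousAt (fun z : ℝ × ℝ => z.1 ^ 2 / (2 * rms z ^ 2)) z := by
      fun_prop (disch := positivity)
    have hsnd : ContinuousAt (fun z : ℝ × ℝ => z.2 / rms z) z := by fun_prop (disch := positivity)
    exact hsnd.mul (((continuousAt_const.sub hθ).mul hk).add (hθ.mul hw))

theorem contDiffAt_radialSaddle (h : IsSaddleProfile k w R) (hz : rms z < R) :
    ContDiffAt ℝ 1 (radialSaddle k) z := by
  rw [contDiffAt_one_iff]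
  refine ⟨radialSaddleFDeriv k w, {z | rms z < R},
    (isOpen_lt continuous_rms continuous_const).mem_nhds hz, fun z hz => ?_,
    fun z hz => h.hasFDerivAt_radialSaddle hz⟩
  have hfst := h.continuousAt_radialSaddlePartial hz
  have hsnd : ContinuousAt (fun z : ℝ × ℝ => radialSaddlePartial k w z.swap) z :=
    ContinuousAt.comp (f := Prod.swap)
      (h.continuousAt_radialSaddlePartial (z := z.swap) (by rwa [rms_swap]))
      continuous_swap.continuousAt
  unfold radialSaddleFDeriv
  exact ((hfst.smul continuousAt_const).add (hsnd.smul continuousAt_const)).continuousWithinAt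

end IsSaddleProfile

/-! ### The iterated logarithm profile -/

/-- The profile `1 / log (-log s)`. At `s = 0` the conventions `log 0 = 0` and `0⁻¹ = 0` give the
limit `0`. -/
noncomputable def invLogLog (s : ℝ) : ℝ := (log (-log s))⁻¹

/-- The function `s k'(s)` for the profile `k = invLogLog`. -/
noncomputable def invLogLogSlope (s : ℝ) : ℝ := invLogLog s ^ 2 * (-log s)⁻¹

theorem invLogLog_zero : invLogLog 0 = 0 := by simp [invLogLog]

theorem invLogLogSlope_zero : invLogLogSlope 0 = 0 := by simp [invLogLogSlope]

theorem exp_one_lt_neg_log {s : ℝ} (hs : s ∈ Ioo 0 (exp (-exp 1))) : exp 1 < -log s :=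
  lt_neg_of_lt_neg ((log_lt_iff_lt_exp hs.1).2 hs.2)

theorem one_lt_log_neg_log {s : ℝ} (hs : s ∈ Ioo 0 (exp (-exp 1))) : 1 < log (-log s) :=
  (lt_log_iff_exp_lt ((exp_pos 1).trans (exp_one_lt_neg_log hs))).2 (exp_one_lt_neg_log hs)

theorem invLogLog_mem_Icc {s : ℝ} (hs : s ∈ Ico 0 (exp (-exp 1))) :
    invLogLog s ∈ Icc (0 : ℝ) 1 := by
  rcases hs.1.eq_or_lt with rfl | hs₀
  · simp [invLogLog_zero]
  have hlog := one_lt_log_neg_log ⟨hs₀, hs.2⟩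
  exact ⟨inv_nonneg.2 (by linarith), inv_le_one_of_one_le₀ hlog.le⟩

theorem invLogLogSlope_mem_Icc {s : ℝ} (hs : s ∈ Ico 0 (exp (-exp 1))) :
    invLogLogSlope s ∈ Icc (0 : ℝ) 1 := by
  rcases hs.1.eq_or_lt with rfl | hs₀
  · simp [invLogLogSlope_zero]
  obtain ⟨hk₀, hk₁⟩ := invLogLog_mem_Icc hs
  have hlog : 1 ≤ -log s :=
    (one_lt_exp_iff.2 one_pos).le.trans (exp_one_lt_neg_log ⟨hs₀, hs.2⟩).le
  exact ⟨mul_nonneg (sq_nonneg _) (inv_nonneg.2 (by linarith)),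
    mul_le_one₀ (pow_le_one₀ hk₀ hk₁) (inv_nonneg.2 (by linarith)) (inv_le_one_of_one_le₀ hlog)⟩

theorem hasDerivAt_invLogLog {s : ℝ} (hs : s ∈ Ioo 0 (exp (-exp 1))) :
    HasDerivAt invLogLog (invLogLogSlope s / s) s := by
  have hlog := (exp_pos 1).trans (exp_one_lt_neg_log hs)
  have hloglog := one_pos.trans (one_lt_log_neg_log hs)
  refine (((hasDerivAt_log hs.1.ne').neg.log hlog.ne').inv hloglog.ne').congr_deriv ?_
  rw [invLogLogSlope, invLogLog]
  simp only [Pi.neg_apply]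
  generalize -log s = L at hlog hloglog ⊢
  field_simp

theorem tendsto_neg_log_nhdsGT_zero : Tendsto (fun s => -log s) (𝓝[>] 0) atTop :=
  tendsto_neg_atBot_atTop.comp tendsto_log_nhdsGT_zero

theorem tendsto_invLogLog_nhdsGT_zero : Tendsto invLogLog (𝓝[>] 0) (𝓝 0) :=
  tendsto_inv_atTop_zero.comp (tendsto_log_atTop.comp tendsto_neg_log_nhdsGT_zero)

theorem tendsto_invLogLogSlope_nhdsGT_zero : Tendsto invLogLogSlope (𝓝[>] 0) (𝓝 0) := by
  have h := (tendsto_invLogLog_nhdsGT_zero.pow 2).mul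
    (tendsto_inv_atTop_zero.comp tendsto_neg_log_nhdsGT_zero)
  rwa [zero_pow two_ne_zero, zero_mul] at h

theorem continuousOn_Ico_of_tendsto {g : ℝ → ℝ} {R : ℝ} (hzero : Tendsto g (𝓝[>] 0) (𝓝 (g 0)))
    (hpos : ∀ s ∈ Ioo 0 R, ContinuousAt g s) : ContinuousOn g (Ico 0 R) := by
  intro s hs
  rcases hs.1.eq_or_lt with rfl | hs₀
  · exact (continuousWithinAt_Ioi_iff_Ici.1 hzero).mono fun x hx => hx.1
  · exact (hpos s ⟨hs₀, hs.2⟩).continuousWithinAt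

theorem isSaddleProfile_invLogLog :
    IsSaddleProfile invLogLog invLogLogSlope (exp (-exp 1)) where
  continuousOn := continuousOn_Ico_of_tendsto
    (by simpa only [invLogLog_zero] using tendsto_invLogLog_nhdsGT_zero)
    fun s hs => (hasDerivAt_invLogLog hs).continuousAt
  continuousOn_slope := continuousOn_Ico_of_tendsto
    (by simpa only [invLogLogSlope_zero] using tendsto_invLogLogSlope_nhdsGT_zero)
    fun s hs => ((hasDerivAt_invLogLog hs).continuousAt.pow 2).mul
      ((continuousAt_log hs.1.ne').neg.inv₀ ((exp_pos 1).trans (exp_one_lt_neg_log hs)).ne')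
  zero := invLogLog_zero
  slope_zero := invLogLogSlope_zero
  hasDerivAt _ := hasDerivAt_invLogLog

/-! ### The corner profile and the folded function -/

/-- The function near the corner at the origin, in coordinates rescaled by `δ`: a step to the
plateau `1` plus a saddle of size `δ`. -/
noncomputable def cornerProfile (δ : ℝ) (z : ℝ × ℝ) : ℝ :=
  oddStep z.1 * oddStep z.2 + radialSaddle invLogLog (δ • Prod.map oddCutoff oddCutoff z)

/-- The function on the torus: `cornerProfile` pulled back along the triangle wave. -/
noncomputable def foldedCorner (δ : ℝ) (z : ℝ × ℝ) : ℝ :=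
  cornerProfile δ (δ⁻¹ • Prod.map triangleWave triangleWave z)

theorem contDiff_oddStep_mul_oddStep :
    ContDiff ℝ 1 fun z : ℝ × ℝ => oddStep z.1 * oddStep z.2 :=
  (contDiff_oddStep.comp contDiff_fst).mul (contDiff_oddStep.comp contDiff_snd)

theorem norm_fderiv_oddStep_mul_oddStep_le (z : ℝ × ℝ) :
    ‖fderiv ℝ (fun z : ℝ × ℝ => oddStep z.1 * oddStep z.2) z‖ ≤ 6 := by
  have hfst : HasFDerivAt (fun z : ℝ × ℝ => oddStep z.1)
      (oddStepSlope z.1 • ContinuousLinearMap.fst ℝ ℝ ℝ) z :=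
    (hasDerivAt_oddStep z.1).comp_hasFDerivAt z hasFDerivAt_fst
  have hsnd : HasFDerivAt (fun z : ℝ × ℝ => oddStep z.2)
      (oddStepSlope z.2 • ContinuousLinearMap.snd ℝ ℝ ℝ) z :=
    (hasDerivAt_oddStep z.2).comp_hasFDerivAt z hasFDerivAt_snd
  have hbound {L : ℝ × ℝ →L[ℝ] ℝ} (hL : ‖L‖ ≤ 1) (x y : ℝ) :
      ‖oddStep x • oddStepSlope y • L‖ ≤ 3 := by
    rw [norm_smul, norm_smul, norm_of_nonneg (oddStepSlope_nonneg y)]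
    exact (mul_le_of_le_one_left (by have := oddStepSlope_nonneg y; positivity)
      (abs_oddStep_le x)).trans
      ((mul_le_of_le_one_right (oddStepSlope_nonneg y) hL).trans (oddStepSlope_le y))
  have hfderiv := (hfst.mul hsnd).fderiv
  exact hfderiv ▸ (norm_add_le_of_le (hbound (ContinuousLinearMap.norm_snd_le ..) z.1 z.2)
    (hbound (ContinuousLinearMap.norm_fst_le ..) z.2 z.1)).trans_eq (by norm_num)

theorem exp_neg_exp_one_lt_half : exp (-exp 1) < 1 / 2 := by
  have htwo : 2 < exp (exp 1) :=
    exp_one_gt_two.trans (exp_lt_exp.2 (one_lt_exp_iff.2 one_pos))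
  rw [exp_neg, one_div]
  exact inv_strictAnti₀ two_pos htwo

theorem one_div_hundred_lt_exp_neg_exp_one : 1 / 100 < exp (-exp 1) := by
  have hhundred : exp (exp 1) < 100 := calc
    exp (exp 1) < exp 3 := exp_lt_exp.2 exp_one_lt_three
    _ = exp 1 ^ 3 := by rw [← exp_nat_mul]; norm_num
    _ < 3 ^ 3 := pow_lt_pow_left₀ exp_one_lt_three (exp_pos 1).le three_ne_zero
    _ < 100 := by norm_num
  rw [exp_neg, one_div]
  exact inv_strictAnti₀ (exp_pos _) hhundred

section CornerProfile

variable {δ : ℝ}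

theorem rms_smul_oddCutoff_mem_Ico (hδ₀ : 0 ≤ δ) (hδ₁ : δ < exp (-exp 1)) (z : ℝ × ℝ) :
    rms (δ • Prod.map oddCutoff oddCutoff z) ∈ Ico 0 (exp (-exp 1)) := by
  refine ⟨rms_nonneg _, (rms_le_norm _).trans_lt (lt_of_le_of_lt ?_ hδ₁)⟩
  rw [norm_smul, norm_of_nonneg hδ₀]
  exact mul_le_of_le_one_right hδ₀ (max_le (abs_oddCutoff_le z.1) (abs_oddCutoff_le z.2))

theorem cornerProfile_neg_fst (δ u v : ℝ) :
    cornerProfile δ (-u, v) = -cornerProfile δ (u, v) := by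
  simp only [cornerProfile, Prod.map_apply, Prod.smul_mk, smul_eq_mul, oddStep_neg, oddCutoff_neg,
    mul_neg, neg_mul, radialSaddle_neg_fst, neg_add]

theorem cornerProfile_neg_snd (δ u v : ℝ) :
    cornerProfile δ (u, -v) = -cornerProfile δ (u, v) := by
  simp only [cornerProfile, Prod.map_apply, Prod.smul_mk, smul_eq_mul, oddStep_neg, oddCutoff_neg,
    mul_neg, radialSaddle_neg_snd, neg_add]

theorem cornerProfile_eq_one {u v : ℝ} (hu : 1 ≤ u) (hv : 1 ≤ v) : cornerProfile δ (u, v) = 1 := by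
  simp [cornerProfile, oddStep_eq_one, oddCutoff_eq_zero, hu, hv, radialSaddle]

theorem cornerProfile_self (hδ : 0 < δ) {u : ℝ} (hu : u ∈ Ioc (0 : ℝ) (1 / 2)) :
    cornerProfile δ (u, u) = δ * u * invLogLog (δ * u) := by
  have hu' : |u| ≤ 1 / 2 := by rw [abs_of_pos hu.1]; exact hu.2
  simp only [cornerProfile, Prod.map_apply, Prod.smul_mk, smul_eq_mul, oddStep_eq_zero hu',
    oddCutoff_eq_self hu', mul_zero, zero_add]
  exact radialSaddle_self _ (mul_pos hδ hu.1)

theorem contDiff_radialSaddle_smul_oddCutoff (hδ₀ : 0 ≤ δ) (hδ₁ : δ < exp (-exp 1)) :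
    ContDiff ℝ 1 fun z => radialSaddle invLogLog (δ • Prod.map oddCutoff oddCutoff z) := by
  have hcutoff : ContDiff ℝ 1 fun z => δ • Prod.map oddCutoff oddCutoff z :=
    (contDiff_oddCutoff.prodMap contDiff_oddCutoff).const_smul δ
  refine contDiff_iff_contDiffAt.2 fun z => ?_
  exact (isSaddleProfile_invLogLog.contDiffAt_radialSaddle
    (rms_smul_oddCutoff_mem_Ico hδ₀ hδ₁ z).2).comp z hcutoff.contDiffAt

theorem contDiff_cornerProfile (hδ₀ : 0 ≤ δ) (hδ₁ : δ < exp (-exp 1)) :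
    ContDiff ℝ 1 (cornerProfile δ) :=
  contDiff_oddStep_mul_oddStep.add (contDiff_radialSaddle_smul_oddCutoff hδ₀ hδ₁)

theorem norm_fderiv_cornerProfile_le (hδ₀ : 0 ≤ δ) (hδ₁ : δ < exp (-exp 1)) (z : ℝ × ℝ) :
    ‖fderiv ℝ (cornerProfile δ) z‖ ≤ 6 + 28 * δ := by
  have hρ := rms_smul_oddCutoff_mem_Ico hδ₀ hδ₁ z
  have hsaddle := isSaddleProfile_invLogLog.hasFDerivAt_radialSaddle hρ.2
  have hsaddle_norm : ‖fderiv ℝ (radialSaddle invLogLog) (δ • Prod.map oddCutoff oddCutoff z)‖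
      ≤ 4 * 1 := by
    rw [hsaddle.fderiv]
    exact norm_radialSaddleFDeriv_le
      ((abs_of_nonneg (invLogLog_mem_Icc hρ).1).trans_le (invLogLog_mem_Icc hρ).2)
      ((abs_of_nonneg (invLogLogSlope_mem_Icc hρ).1).trans_le (invLogLogSlope_mem_Icc hρ).2)
  have hcutoff := norm_fderiv_comp_smul_prodMap_self_le hsaddle.differentiableAt hsaddle_norm
    (contDiff_oddCutoff.differentiable one_ne_zero) norm_deriv_oddCutoff_le
  have hadd : fderiv ℝ (cornerProfile δ) z =
      fderiv ℝ (fun z : ℝ × ℝ => oddStep z.1 * oddStep z.2) z +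
        fderiv ℝ (fun z => radialSaddle invLogLog (δ • Prod.map oddCutoff oddCutoff z)) z :=
    fderiv_add (contDiff_oddStep_mul_oddStep.differentiable one_ne_zero z)
      ((contDiff_radialSaddle_smul_oddCutoff hδ₀ hδ₁).differentiable one_ne_zero z)
  calc ‖fderiv ℝ (cornerProfile δ) z‖ ≤ 6 + 4 * 1 * (|δ| * 7) :=
        hadd ▸ norm_add_le_of_le (norm_fderiv_oddStep_mul_oddStep_le z) hcutoff
    _ = 6 + 28 * δ := by rw [abs_of_nonneg hδ₀]; ring

theorem cornerProfile_mem_Icc (hδ₀ : 0 ≤ δ) (hδ₁ : δ < exp (-exp 1)) {z : ℝ × ℝ} (hz : 0 ≤ z) :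
    cornerProfile δ z ∈ Icc (0 : ℝ) 1 := by
  obtain ⟨ha₀, ha₁⟩ := oddStep_mem_Icc hz.1
  obtain ⟨hb₀, hb₁⟩ := oddStep_mem_Icc hz.2
  obtain ⟨hu₀, hu₁⟩ := oddCutoff_mem_Icc hz.1
  obtain ⟨hv₀, hv₁⟩ := oddCutoff_mem_Icc hz.2
  set a := oddStep z.1
  set b := oddStep z.2
  set q := δ • Prod.map oddCutoff oddCutoff z
  obtain ⟨hsaddle₀, hsaddle₁⟩ : radialSaddle invLogLog q ∈ Icc 0 (rms q) :=
    radialSaddle_mem_Icc ⟨mul_nonneg hδ₀ hu₀, mul_nonneg hδ₀ hv₀⟩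
      (invLogLog_mem_Icc (rms_smul_oddCutoff_mem_Ico hδ₀ hδ₁ z))
  have hδ : δ ≤ 1 / 2 := (hδ₁.trans exp_neg_exp_one_lt_half).le
  have hnorm : ‖q‖ ≤ 1 / 2 * ((1 - a ^ 2) + (1 - b ^ 2)) := by
    rw [norm_smul, norm_of_nonneg hδ₀]
    refine mul_le_mul hδ (max_le ?_ ?_) (norm_nonneg _) (by norm_num)
    · exact (abs_of_nonneg hu₀).trans_le (by nlinarith)
    · exact (abs_of_nonneg hv₀).trans_le (by nlinarith)
  constructor
  · exact add_nonneg (mul_nonneg ha₀ hb₀) hsaddle₀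
  · calc a * b + radialSaddle invLogLog q
        ≤ a * b + 1 / 2 * ((1 - a ^ 2) + (1 - b ^ 2)) := by
          gcongr
          exact hsaddle₁.trans ((rms_le_norm q).trans hnorm)
      _ = 1 - (a - b) ^ 2 / 2 := by ring
      _ ≤ 1 := sub_le_self _ (by positivity)

theorem contDiff_foldedCorner (hδ₀ : 0 ≤ δ) (hδ₁ : δ < exp (-exp 1)) :
    ContDiff ℝ 1 (foldedCorner δ) :=
  (contDiff_cornerProfile hδ₀ hδ₁).comp
    ((contDiff_triangleWave.prodMap contDiff_triangleWave).const_smul δ⁻¹)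

theorem norm_fderiv_foldedCorner_le (hδ₀ : 0 < δ) (hδ₁ : δ < exp (-exp 1)) (z : ℝ × ℝ) :
    ‖fderiv ℝ (foldedCorner δ) z‖ ≤ 6 / δ + 28 := by
  calc ‖fderiv ℝ (foldedCorner δ) z‖ ≤ (6 + 28 * δ) * (|δ⁻¹| * 1) :=
        norm_fderiv_comp_smul_prodMap_self_le
          ((contDiff_cornerProfile hδ₀.le hδ₁).differentiable one_ne_zero _)
          (norm_fderiv_cornerProfile_le hδ₀.le hδ₁ _)
          (contDiff_triangleWave.differentiable one_ne_zero) norm_deriv_triangleWave_le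
    _ = 6 / δ + 28 := by rw [abs_of_pos (inv_pos.2 hδ₀)]; field_simp

theorem foldedCorner_add_two_fst (δ x y : ℝ) :
    foldedCorner δ (x + 2, y) = foldedCorner δ (x, y) := by
  simp only [foldedCorner, Prod.map_apply, triangleWave_add_two]

theorem foldedCorner_add_two_snd (δ x y : ℝ) :
    foldedCorner δ (x, y + 2) = foldedCorner δ (x, y) := by
  simp only [foldedCorner, Prod.map_apply, triangleWave_add_two]

theorem foldedCorner_neg_fst (δ x y : ℝ) : foldedCorner δ (-x, y) = -foldedCorner δ (x, y) := by
  simp only [foldedCorner, Prod.map_apply, triangleWave_neg, Prod.smul_mk, smul_neg,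
    cornerProfile_neg_fst]

theorem foldedCorner_neg_snd (δ x y : ℝ) : foldedCorner δ (x, -y) = -foldedCorner δ (x, y) := by
  simp only [foldedCorner, Prod.map_apply, triangleWave_neg, Prod.smul_mk, smul_neg,
    cornerProfile_neg_snd]

theorem foldedCorner_mem_Icc (hδ₀ : 0 ≤ δ) (hδ₁ : δ < exp (-exp 1)) {z : ℝ × ℝ}
    (hz : z ∈ Icc (0 : ℝ) 1 ×ˢ Icc (0 : ℝ) 1) : foldedCorner δ z ∈ Icc (0 : ℝ) 1 := by
  have hwave {x : ℝ} (hx : x ∈ Icc (0 : ℝ) 1) : 0 ≤ δ⁻¹ * triangleWave x :=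
    mul_nonneg (inv_nonneg.2 hδ₀) (le_triangleWave le_rfl (by norm_num) (by rwa [sub_zero]))
  exact cornerProfile_mem_Icc hδ₀ hδ₁ ⟨hwave hz.1, hwave hz.2⟩

theorem foldedCorner_eq_one (hδ₀ : 0 < δ) (hδ₁ : δ ≤ 1 / 3) {z : ℝ × ℝ}
    (hz : z ∈ Icc δ (1 - δ) ×ˢ Icc δ (1 - δ)) : foldedCorner δ z = 1 := by
  have hwave {x : ℝ} (hx : x ∈ Icc δ (1 - δ)) : 1 ≤ δ⁻¹ * triangleWave x :=
    (le_inv_mul_iff₀ hδ₀).2 ((mul_one δ).trans_le (le_triangleWave hδ₀.le hδ₁ hx))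
  exact cornerProfile_eq_one (hwave hz.1) (hwave hz.2)

theorem foldedCorner_self (hδ₁ : δ ≤ 2 / 3) {s : ℝ} (hs : s ∈ Ioc 0 (δ / 2)) :
    foldedCorner δ (s, s) = s * invLogLog s := by
  have hδ₀ : 0 < δ := by linarith [hs.1, hs.2]
  have hu : δ⁻¹ * s ∈ Ioc (0 : ℝ) (1 / 2) :=
    ⟨mul_pos (inv_pos.2 hδ₀) hs.1, (inv_mul_le_iff₀ hδ₀).2 (by linarith [hs.2])⟩
  have hwave : triangleWave s = s :=
    triangleWave_eq_self (by rw [abs_of_pos hs.1]; linarith [hs.2])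
  simp only [foldedCorner, Prod.map_apply, hwave, Prod.smul_mk, smul_eq_mul,
    cornerProfile_self hδ₀ hu, mul_inv_cancel_left₀ hδ₀.ne']

end CornerProfile

/-- For every δ ∈ (0, 1/100] there exists a C¹ function ω₀ : ℝ² → ℝ,
2-periodic in each variable, odd in x₁ and in x₂, with 0 ≤ ω₀ ≤ 1 on [0,1]²,
ω₀ = 1 on [δ, 1−δ]², ω₀(s,s) = s / log(−log s) for s ∈ (0, δ/2], and the Euclidean
norm of the gradient bounded by 20/δ everywhere. -/
theorem statement0 (δ : ℝ) (hδ0 : 0 < δ) (hδ1 : δ ≤ 1 / 100) :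
    ∃ ω₀ : ℝ × ℝ → ℝ,
      ContDiff ℝ 1 ω₀ ∧
      (∀ x : ℝ × ℝ, ω₀ (x.1 + 2, x.2) = ω₀ x) ∧
      (∀ x : ℝ × ℝ, ω₀ (x.1, x.2 + 2) = ω₀ x) ∧
      (∀ x : ℝ × ℝ, ω₀ (-x.1, x.2) = -ω₀ x) ∧
      (∀ x : ℝ × ℝ, ω₀ (x.1, -x.2) = -ω₀ x) ∧
      (∀ x ∈ Icc (0:ℝ) 1 ×ˢ Icc (0:ℝ) 1, ω₀ x ∈ Icc (0:ℝ) 1) ∧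
      (∀ x ∈ Icc δ (1 - δ) ×ˢ Icc δ (1 - δ), ω₀ x = 1) ∧
      (∀ s ∈ Ioc (0:ℝ) (δ / 2), ω₀ (s, s) = s / Real.log (-Real.log s)) ∧
      (∀ x : ℝ × ℝ,
        Real.sqrt ((fderiv ℝ ω₀ x (1, 0)) ^ 2 + (fderiv ℝ ω₀ x (0, 1)) ^ 2) ≤ 20 / δ) := by
  have hδ : δ < exp (-exp 1) := hδ1.trans_lt one_div_hundred_lt_exp_neg_exp_one
  refine ⟨foldedCorner δ, contDiff_foldedCorner hδ0.le hδ,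
    fun x => foldedCorner_add_two_fst δ x.1 x.2, fun x => foldedCorner_add_two_snd δ x.1 x.2,
    fun x => foldedCorner_neg_fst δ x.1 x.2, fun x => foldedCorner_neg_snd δ x.1 x.2,
    fun x => foldedCorner_mem_Icc hδ0.le hδ, fun x => foldedCorner_eq_one hδ0 (by linarith),
    fun s => foldedCorner_self (by linarith), fun x => ?_⟩
  have hslack : 6 / δ + 28 ≤ 20 / δ := by
    rw [← le_sub_iff_add_le', ← sub_div, le_div_iff₀ hδ0]
    linarith
  exact (sqrt_sq_add_sq_le_opNorm _).trans ((norm_fderiv_foldedCorner_le hδ0 hδ x).trans hslack)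
end

section
/- Let 0 < a < 1 and δ > 0 satisfy a² + 48δ/π ≤ 1, and let S = {(r cos θ, r sin θ) : a ≤ r ≤ 1, π/6 ≤ θ ≤ π/3} ⊂ ℝ². Then for every Lebesgue-measurable set E ⊆ S with two-dimensional Lebesgue measure |E| ≤ 4δ, one has ∫_{S ∖ E} |y|^{−2} dy ≥ (π/12) · (−ln(a² + 48δ/π)). -/
open Real Set MeasureTheory

/-!
By the bathtub principle, among all subsets of a sector whose measure is at most that of its inner
part `a ≤ r ≤ R`, removing this inner part lowers the integral of the radially decreasing function
`|y|⁻²` the most. What is left is the outer part `R < r ≤ b`, over which polar coordinates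
evaluate the integral to the opening angle times `∫ r⁻¹ dr = log (b / R)`.
-/

section Bathtub

variable {X : Type*} [MeasurableSpace X] {μ : Measure X} {f : X → ℝ} {S T E : Set X} {c : ℝ}

theorem setIntegral_le_setIntegral_of_bathtub (hf : IntegrableOn f S μ)
    (hT : MeasurableSet T) (hTS : T ⊆ S) (hE : MeasurableSet E) (hES : E ⊆ S)
    (hμT : μ T ≠ ⊤) (hμ : μ E ≤ μ T) (hc : 0 ≤ c)
    (hcT : ∀ x ∈ T, c ≤ f x) (hcS : ∀ x ∈ S \ T, f x ≤ c) :
    ∫ x in E, f x ∂μ ≤ ∫ x in T, f x ∂μ := by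
  have hμE : μ E ≠ ⊤ := ne_top_of_le_ne_top hμT hμ
  have hμET : μ (E \ T) ≠ ⊤ := measure_ne_top_of_subset sdiff_subset hμE
  have hμTE : μ (T \ E) ≠ ⊤ := measure_ne_top_of_subset sdiff_subset hμT
  have upper : ∫ x in E \ T, f x ∂μ ≤ c * μ.real (E \ T) := calc
    ∫ x in E \ T, f x ∂μ ≤ ∫ _ in E \ T, c ∂μ :=
      setIntegral_mono_on (hf.mono_set (sdiff_subset.trans hES)) (integrableOn_const hμET)
        (hE.diff hT) fun x hx => hcS x ⟨hES hx.1, hx.2⟩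
    _ = c * μ.real (E \ T) := by rw [setIntegral_const, smul_eq_mul, mul_comm]
  have lower : c * μ.real (T \ E) ≤ ∫ x in T \ E, f x ∂μ :=
    setIntegral_ge_of_const_le_real (hT.diff hE) hμTE (fun x hx => hcT x hx.1)
      (hf.mono_set (sdiff_subset.trans hTS))
  have exchange : μ.real (E \ T) ≤ μ.real (T \ E) := by
    have hreal : μ.real E ≤ μ.real T := ENNReal.toReal_mono hμT hμ
    rw [← measureReal_inter_add_sdiff hT hμE, ← measureReal_inter_add_sdiff hE hμT,
      inter_comm T E] at hreal
    linarith
  calc ∫ x in E, f x ∂μ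
      = ∫ x in E ∩ T, f x ∂μ + ∫ x in E \ T, f x ∂μ :=
        (integral_inter_add_sdiff hT (hf.mono_set hES)).symm
    _ ≤ ∫ x in E ∩ T, f x ∂μ + ∫ x in T \ E, f x ∂μ := by
        grw [upper, exchange, lower]
    _ = ∫ x in T, f x ∂μ := by
        rw [inter_comm, integral_inter_add_sdiff hE (hf.mono_set hTS)]

theorem setIntegral_sdiff_le_setIntegral_sdiff_of_bathtub (hf : IntegrableOn f S μ)
    (hT : MeasurableSet T) (hTS : T ⊆ S) (hE : MeasurableSet E) (hES : E ⊆ S)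
    (hμT : μ T ≠ ⊤) (hμ : μ E ≤ μ T) (hc : 0 ≤ c)
    (hcT : ∀ x ∈ T, c ≤ f x) (hcS : ∀ x ∈ S \ T, f x ≤ c) :
    ∫ x in S \ T, f x ∂μ ≤ ∫ x in S \ E, f x ∂μ := by
  rw [setIntegral_sdiff hT hf hTS, setIntegral_sdiff hE hf hES]
  exact sub_le_sub_left
    (setIntegral_le_setIntegral_of_bathtub hf hT hTS hE hES hμT hμ hc hcT hcS) _

end Bathtub

/-- The region of the plane swept out by polar coordinates `(r, θ)` with `r ∈ I` and `θ ∈ Θ`.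
The sets are arbitrary; `I ×ˢ Θ ⊆ polarCoord.target` ensures that these coordinates are unique. -/
def polarSector (I Θ : Set ℝ) : Set (ℝ × ℝ) :=
  polarCoord.symm '' (I ×ˢ Θ)

section PolarSector

variable {I J Θ : Set ℝ}

theorem polarSector_Icc_Icc (a b α β : ℝ) :
    polarSector (Icc a b) (Icc α β) = {p : ℝ × ℝ | ∃ r θ : ℝ, a ≤ r ∧ r ≤ b ∧ α ≤ θ ∧ θ ≤ β ∧
      p = (r * cos θ, r * sin θ)} := by
  ext p
  simp only [polarSector, mem_image, mem_prod, mem_Icc, Prod.exists, polarCoord_symm_apply,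
    mem_ofPred_eq, and_assoc, eq_comm]

theorem polarSector_mono (hJI : J ⊆ I) : polarSector J Θ ⊆ polarSector I Θ :=
  image_mono (prod_mono_left hJI)

theorem sq_add_sq_polarCoord_symm (p : ℝ × ℝ) :
    (polarCoord.symm p).1 ^ 2 + (polarCoord.symm p).2 ^ 2 = p.1 ^ 2 := by
  rw [polarCoord_symm_apply]
  linear_combination p.1 ^ 2 * sin_sq_add_cos_sq p.2

theorem polarSector_sdiff_polarSector (hIΘ : I ×ˢ Θ ⊆ polarCoord.target) (hJI : J ⊆ I) :
    polarSector I Θ \ polarSector J Θ = polarSector (I \ J) Θ := by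
  have hprod : (I \ J) ×ˢ Θ = I ×ˢ Θ \ J ×ˢ Θ := by simp [prod_sdiff_prod]
  rw [polarSector, polarSector, polarSector, hprod,
    (polarCoord.symm.injOn.mono hIΘ).image_sdiff_subset (prod_mono_left hJI)]

theorem measurableSet_polarSector (hI : MeasurableSet I) (hΘ : MeasurableSet Θ)
    (hIΘ : I ×ˢ Θ ⊆ polarCoord.target) : MeasurableSet (polarSector I Θ) :=
  (hI.prod hΘ).image_of_continuousOn_injOn continuous_polarCoord_symm.continuousOn
    (polarCoord.symm.injOn.mono hIΘ)

theorem isCompact_polarSector (hI : IsCompact I) (hΘ : IsCompact Θ) :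
    IsCompact (polarSector I Θ) :=
  (hI.prod hΘ).image continuous_polarCoord_symm

theorem setIntegral_polarSector {F : Type*} [NormedAddCommGroup F] [NormedSpace ℝ F]
    (hI : MeasurableSet I) (hΘ : MeasurableSet Θ) (hIΘ : I ×ˢ Θ ⊆ polarCoord.target)
    (f : ℝ × ℝ → F) :
    ∫ y in polarSector I Θ, f y = ∫ p in I ×ˢ Θ, p.1 • f (polarCoord.symm p) := by
  have hpull : ∀ p ∈ polarCoord.target,
      p.1 • (polarSector I Θ).indicator f (polarCoord.symm p) =
        (I ×ˢ Θ).indicator (fun p => p.1 • f (polarCoord.symm p)) p := by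
    intro p hp
    have hmem : polarCoord.symm p ∈ polarSector I Θ ↔ p ∈ I ×ˢ Θ :=
      polarCoord.symm.injOn.mem_image_iff hIΘ hp
    by_cases h : p ∈ I ×ˢ Θ
    · rw [indicator_of_mem (hmem.2 h), indicator_of_mem h]
    · rw [indicator_of_notMem (mt hmem.1 h), indicator_of_notMem h, smul_zero]
  rw [← integral_indicator (measurableSet_polarSector hI hΘ hIΘ), ← integral_comp_polarCoord_symm,
    setIntegral_congr_fun polarCoord.open_target.measurableSet hpull,
    setIntegral_indicator (hI.prod hΘ), inter_eq_self_of_subset_right hIΘ]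

theorem setIntegral_polarSector_radial (hI : MeasurableSet I) (hΘ : MeasurableSet Θ)
    (hIΘ : I ×ˢ Θ ⊆ polarCoord.target) (h : ℝ → ℝ) :
    ∫ y in polarSector I Θ, h (y.1 ^ 2 + y.2 ^ 2) =
      volume.real Θ * ∫ r in I, r * h (r ^ 2) := by
  have hsplit := setIntegral_prod_mul (μ := volume) (ν := volume)
    (fun r : ℝ => r * h (r ^ 2)) (fun _ => (1 : ℝ)) I Θ
  simp only [mul_one, setIntegral_one_eq_measureReal] at hsplit
  simp only [setIntegral_polarSector hI hΘ hIΘ, sq_add_sq_polarCoord_symm, smul_eq_mul]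
  rw [mul_comm, ← hsplit, Measure.volume_eq_prod]

end PolarSector

section InverseSquare

variable {a b R α β : ℝ}

theorem Icc_prod_Icc_subset_polarCoord_target (ha : 0 < a) (hα : -π < α) (hβ : β < π) :
    Icc a b ×ˢ Icc α β ⊆ polarCoord.target :=
  prod_mono (fun _ hr => ha.trans_le hr.1) (Icc_subset_Ioo hα hβ)

theorem volume_polarSector_Icc (ha : 0 < a) (haR : a ≤ R) (hα : -π < α) (hαβ : α ≤ β)
    (hβ : β < π) :
    volume (polarSector (Icc a R) (Icc α β)) =
      ENNReal.ofReal ((β - α) * ((R ^ 2 - a ^ 2) / 2)) := by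
  have hfinite : volume (polarSector (Icc a R) (Icc α β)) ≠ ⊤ :=
    (isCompact_polarSector isCompact_Icc isCompact_Icc).measure_ne_top
  rw [← ofReal_measureReal hfinite, ← setIntegral_one_eq_measureReal,
    setIntegral_polarSector_radial measurableSet_Icc measurableSet_Icc
      (Icc_prod_Icc_subset_polarCoord_target ha hα hβ) fun _ => 1,
    volume_real_Icc_of_le hαβ]
  simp only [mul_one]
  rw [integral_Icc_eq_integral_Ioc, ← intervalIntegral.integral_of_le haR, integral_id]

theorem setIntegral_inv_sq_polarSector_Ioc (hR : 0 < R) (hRb : R ≤ b) (hα : -π < α)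
    (hαβ : α ≤ β) (hβ : β < π) :
    ∫ y in polarSector (Ioc R b) (Icc α β), (y.1 ^ 2 + y.2 ^ 2)⁻¹ = (β - α) * log (b / R) := by
  have htarget : Ioc R b ×ˢ Icc α β ⊆ polarCoord.target :=
    (prod_mono_left Ioc_subset_Icc_self).trans (Icc_prod_Icc_subset_polarCoord_target hR hα hβ)
  have hradial : ∀ r : ℝ, r * (r ^ 2)⁻¹ = r⁻¹ := fun r => by field_simp
  rw [setIntegral_polarSector_radial measurableSet_Ioc measurableSet_Icc htarget fun s => s⁻¹,
    volume_real_Icc_of_le hαβ]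
  simp only [hradial]
  rw [← intervalIntegral.integral_of_le hRb, integral_inv_of_pos hR (hR.trans_le hRb)]

theorem integrableOn_inv_sq_polarSector_Icc (ha : 0 < a) :
    IntegrableOn (fun y : ℝ × ℝ => (y.1 ^ 2 + y.2 ^ 2)⁻¹)
      (polarSector (Icc a b) (Icc α β)) := by
  refine ContinuousOn.integrableOn_compact
    (isCompact_polarSector isCompact_Icc isCompact_Icc) (ContinuousOn.inv₀ (by fun_prop) ?_)
  rintro _ ⟨p, ⟨⟨hap, -⟩, -⟩, rfl⟩
  rw [sq_add_sq_polarCoord_symm]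
  exact (pow_pos (ha.trans_le hap) 2).ne'

theorem mul_log_div_le_setIntegral_inv_sq_polarSector_sdiff (ha : 0 < a) (haR : a ≤ R)
    (hRb : R ≤ b) (hα : -π < α) (hαβ : α ≤ β) (hβ : β < π) {E : Set (ℝ × ℝ)}
    (hE : MeasurableSet E) (hES : E ⊆ polarSector (Icc a b) (Icc α β))
    (hvol : volume E ≤ volume (polarSector (Icc a R) (Icc α β))) :
    (β - α) * log (b / R) ≤
      ∫ y in polarSector (Icc a b) (Icc α β) \ E, (y.1 ^ 2 + y.2 ^ 2)⁻¹ := by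
  have hR : 0 < R := ha.trans_le haR
  have hsub : Icc a R ⊆ Icc a b := Icc_subset_Icc_right hRb
  have houter : polarSector (Icc a b) (Icc α β) \ polarSector (Icc a R) (Icc α β) =
      polarSector (Ioc R b) (Icc α β) := by
    have hIcc : Icc a b \ Icc a R = Ioc R b := by grind
    rw [polarSector_sdiff_polarSector (Icc_prod_Icc_subset_polarCoord_target ha hα hβ) hsub, hIcc]
  rw [← setIntegral_inv_sq_polarSector_Ioc hR hRb hα hαβ hβ, ← houter]
  refine setIntegral_sdiff_le_setIntegral_sdiff_of_bathtub (c := (R ^ 2)⁻¹)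
    (integrableOn_inv_sq_polarSector_Icc ha)
    (isCompact_polarSector isCompact_Icc isCompact_Icc).measurableSet (polarSector_mono hsub)
    hE hES (isCompact_polarSector isCompact_Icc isCompact_Icc).measure_ne_top hvol
    (by positivity) ?_ ?_
  · rintro _ ⟨p, ⟨⟨hap, hpR⟩, -⟩, rfl⟩
    have hp : 0 < p.1 := ha.trans_le hap
    rw [sq_add_sq_polarCoord_symm]
    gcongr
  · rw [houter]
    rintro _ ⟨p, ⟨⟨hRp, -⟩, -⟩, rfl⟩
    rw [sq_add_sq_polarCoord_symm]
    gcongr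

end InverseSquare

theorem statement4_general {a b α β m : ℝ} (ha : 0 < a) (hb : 0 < b) (hα : -π < α)
    (hαβ : α < β) (hβ : β < π) (hm : 0 ≤ m) {E : Set (ℝ × ℝ)} (hE : MeasurableSet E)
    (hES : E ⊆ polarSector (Icc a b) (Icc α β)) (hvol : volume E ≤ ENNReal.ofReal m) :
    (β - α) / 2 * log (b ^ 2 / (a ^ 2 + 2 * m / (β - α))) ≤
      ∫ y in polarSector (Icc a b) (Icc α β) \ E, (y.1 ^ 2 + y.2 ^ 2)⁻¹ := by
  have hangle : 0 < β - α := sub_pos.2 hαβ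
  set R := √(a ^ 2 + 2 * m / (β - α))
  have hR2 : a ^ 2 + 2 * m / (β - α) = R ^ 2 := (sq_sqrt (by positivity)).symm
  have haR : a ≤ R := le_sqrt_of_sq_le (le_add_of_nonneg_right (by positivity))
  have hlog : (β - α) / 2 * log (b ^ 2 / R ^ 2) = (β - α) * log (b / R) := by
    rw [← div_pow, log_pow]
    push_cast
    ring
  rw [hR2, hlog]
  rcases le_total R b with hRb | hbR
  · have harea : (β - α) * ((R ^ 2 - a ^ 2) / 2) = m := by
      rw [← hR2]
      field_simp
      ring
    refine mul_log_div_le_setIntegral_inv_sq_polarSector_sdiff ha haR hRb hα hαβ.le hβ hE hES ?_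
    rwa [volume_polarSector_Icc ha haR hα hαβ.le hβ, harea]
  · have hlog_nonpos : log (b / R) ≤ 0 :=
      log_nonpos (div_nonneg hb.le (sqrt_nonneg _)) (div_le_one_of_le₀ hbR (sqrt_nonneg _))
    exact (mul_nonpos_of_nonneg_of_nonpos hangle.le hlog_nonpos).trans
      (integral_nonneg fun y => by positivity)

/-- bathtub rearrangement estimate on the sector
S = {(r cos θ, r sin θ) : a ≤ r ≤ 1, π/6 ≤ θ ≤ π/3}: if a² + 48δ/π ≤ 1, then for
every measurable E ⊆ S of measure at most 4δ one has
∫_{S∖E} |y|⁻² dy ≥ (π/12)·(−ln(a² + 48δ/π)). -/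
theorem statement4 (a δ : ℝ) (ha0 : 0 < a) (ha1 : a < 1) (hδ : 0 < δ)
    (hcond : a ^ 2 + 48 * δ / π ≤ 1)
    (S : Set (ℝ × ℝ))
    (hS : S = {p : ℝ × ℝ | ∃ r θ : ℝ, a ≤ r ∧ r ≤ 1 ∧ π / 6 ≤ θ ∧ θ ≤ π / 3 ∧
        p = (r * Real.cos θ, r * Real.sin θ)})
    (E : Set (ℝ × ℝ)) (hEmeas : MeasurableSet E) (hES : E ⊆ S)
    (hEvol : volume E ≤ ENNReal.ofReal (4 * δ)) :
    π / 12 * (-Real.log (a ^ 2 + 48 * δ / π)) ≤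
      ∫ y in S \ E, (y.1 ^ 2 + y.2 ^ 2)⁻¹ := by
  rw [← polarSector_Icc_Icc] at hS
  subst hS
  have hangle : π / 12 = (π / 3 - π / 6) / 2 := by ring
  have hradius : 48 * δ / π = 2 * (4 * δ) / (π / 3 - π / 6) := by
    field_simp
    norm_num
  rw [hangle, hradius]
  simpa only [one_pow, one_div, log_inv] using
    statement4_general ha0 one_pos (by linarith [pi_pos]) (by linarith [pi_pos])
      (by linarith [pi_pos]) (by positivity) hEmeas hES hEvol
end
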